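/- Let (X,Σ,m) be a σ-finite measure space, B a separable Banach space, E a Banach B-bundle over X, and p ∈ (1,∞). Then for every ε ∈ (0,2], the following upper bound holds: δ_{Γ_p(E)}(ε) ≤ ess inf_{x ∈ X} δ_{E(x)}(ε), where δ_{Γ_p(E)} is the modulus of convexity of the Banach space Γ_p(E) and δ_{E(x)} that of the fiber E(x). -/

import Mathlib

open MeasureTheory
open scoped ENNReal

/-- A *Banach `B`-bundle* over a measurable space `X`: a weakly measurable multivalued map
whose values are closed linear subspaces of `B`. -/
structure BanachBundle (X : Type*) [MeasurableSpace X]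
    (B : Type*) [NormedAddCommGroup B] [NormedSpace ℝ B] where
  fiber : X → Submodule ℝ B
  isClosed_fiber : ∀ x, IsClosed (fiber x : Set B)
  weaklyMeasurable : ∀ U : Set B, IsOpen U →
    MeasurableSet {x | ((fiber x : Set B) ∩ U).Nonempty}

/-- The space `Γ_p(E)` of `L^p`-sections of a Banach bundle `E`, realized as the subspace of
`L^p(m;B)` of elements whose representatives take values in the fibers `m`-a.e. -/
noncomputable def BanachBundle.sections {X B : Type*} [MeasurableSpace X]
    [NormedAddCommGroup B] [NormedSpace ℝ B]
    (m : Measure X) (p : ℝ≥0∞) [Fact (1 ≤ p)] (E : BanachBundle X B) :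
    Submodule ℝ (Lp B p m) where
  carrier := {f | ∀ᵐ x ∂m, (f : X → B) x ∈ E.fiber x}
  zero_mem' := by
    filter_upwards [Lp.coeFn_zero B p m] with x hx
    show (((0 : Lp B p m) : X → B)) x ∈ E.fiber x
    rw [hx]
    exact (E.fiber x).zero_mem
  add_mem' := by
    intro f g hf hg
    filter_upwards [hf, hg, Lp.coeFn_add f g] with x h1 h2 h3
    show (((f + g : Lp B p m) : X → B)) x ∈ E.fiber x
    rw [h3]
    exact (E.fiber x).add_mem h1 h2
  smul_mem' := by
    intro c f hf
    filter_upwards [hf, Lp.coeFn_smul c f] with x h1 h2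
    show (((c • f : Lp B p m) : X → B)) x ∈ E.fiber x
    rw [h2]
    exact (E.fiber x).smul_mem c h1

/-- The modulus of convexity of a normed space `V`. -/
noncomputable def modulusOfConvexity (V : Type*) [NormedAddCommGroup V] [Module ℝ V]
    (ε : ℝ) : ℝ :=
  sInf {r : ℝ | ∃ v w : V, ‖v‖ = 1 ∧ ‖w‖ = 1 ∧ ε ≤ ‖v - w‖ ∧ r = 1 - ‖(2 : ℝ)⁻¹ • (v + w)‖}

/-- The modulus of convexity of a subset `S` (a fiber of a bundle), with the convention that
the infimum over the empty family equals `1`. -/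
noncomputable def fiberModulus {B : Type*} [NormedAddCommGroup B] (S : Set B) (ε : ℝ) : ℝ :=
  sInf (insert 1 {r : ℝ | ∃ v ∈ S, ∃ w ∈ S,
    ‖v‖ = 1 ∧ ‖w‖ = 1 ∧ ε ≤ ‖v - w‖ ∧ r = 1 - ‖v + w‖ / 2})

/-!
Suppose that the fiber modulus is smaller than `s` on a non-null set. There the unit vectors
`v, w ∈ E(x)` with `ε ≤ ‖v - w‖` and `2 (1 - s) ≤ ‖v + w‖` form nonempty sets, so they can be
chosen measurably in `x`, exactly and not just approximately: the condition `ε ≤ ‖v - w‖` does not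
survive approximation by a dense sequence of sections when `ε = 2`. Aumann's theorem provides the
selection, because a measurable graph has an analytic projection and analytic sets are null
measurable. On a set `P` of positive finite measure the sections `1_P v` and `1_P w` have the
same norm as `1_P`, and their difference and sum are at least `ε` and `2 (1 - s)` times as long;
after normalization they witness that the modulus of the section space is at most `s`.
-/

open Set Filter Topology

section AnalyticSets

/-- The box of all sequences whose first `k` terms are bounded by those of `b`. Such boxes
approximate the compact product `∏ i, [0, b i]` from outside in the proof that analytic sets are
null measurable. -/
def initialBox (b : ℕ → ℕ) (k : ℕ) : Set (ℕ → ℕ) :=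
  {z | ∀ i < k, z i ≤ b i}

theorem initialBox_antitone (b : ℕ → ℕ) : Antitone (initialBox b) :=
  fun _ _ hkl _ hz i hi => hz i (hi.trans_le hkl)

theorem initialBox_succ (b : ℕ → ℕ) (k : ℕ) :
    initialBox b (k + 1) = initialBox b k ∩ {z | z k ≤ b k} := by
  ext z
  exact Nat.forall_lt_succ_right

theorem iInter_closure_image_initialBox_subset_range {Z : Type*} [TopologicalSpace Z] [T2Space Z]
    {f : (ℕ → ℕ) → Z} (hf : Continuous f) (b : ℕ → ℕ) :
    ⋂ k, closure (f '' initialBox b k) ⊆ range f := by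
  intro y hy
  have hne : (comap f (𝓝 y) ⊓ ⨅ k, 𝓟 (initialBox b k)).NeBot := by
    rw [((𝓝 y).basis_sets.comap f |>.inf
      (hasBasis_iInf_principal (initialBox_antitone b).directed_ge)).neBot_iff]
    rintro ⟨U, k⟩ ⟨hU, -⟩
    obtain ⟨-, hzU, z, hz, rfl⟩ := mem_closure_iff_nhds.1 (mem_iInter.1 hy k) U hU
    exact ⟨z, hzU, hz⟩
  let u := Ultrafilter.of (comap f (𝓝 y) ⊓ ⨅ k, 𝓟 (initialBox b k))
  have hu := Ultrafilter.of_le (comap f (𝓝 y) ⊓ ⨅ k, 𝓟 (initialBox b k))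
  have hbound (i : ℕ) : (u.map fun z => z i : Filter ℕ) ≤ 𝓟 (Iic (b i)) :=
    tendsto_principal.2 <| mem_of_superset
      (hu.trans (inf_le_right.trans (iInf_le _ (i + 1)))
        (mem_principal_self (initialBox b (i + 1))))
      fun z hz => hz i i.lt_succ_self
  -- Each coordinate is bounded along `u`, hence converges along `u`.
  choose a _ ha using fun i => (finite_Iic (b i)).isCompact.ultrafilter_le_nhds _ (hbound i)
  have hlim : Tendsto f u (𝓝 (f a)) :=
    (hf.tendsto a).comp (tendsto_pi_nhds.2 ha)
  exact ⟨a, tendsto_nhds_unique hlim (tendsto_iff_comap.2 (hu.trans inf_le_left))⟩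

variable {Z : Type*} [MeasurableSpace Z]

theorem exists_lt_measure_image_inter_le (μ : Measure Z) {f : (ℕ → ℕ) → Z} {c : ℝ≥0∞}
    {T : Set (ℕ → ℕ)} (hT : c < μ (f '' T)) (k : ℕ) :
    ∃ j, c < μ (f '' (T ∩ {z | z k ≤ j})) := by
  have hunion : f '' T = ⋃ j, f '' (T ∩ {z | z k ≤ j}) := by
    rw [← image_iUnion, ← inter_iUnion, inter_eq_left.2]
    exact fun z _ => mem_iUnion.2 ⟨z k, le_refl (z k)⟩
  have hmono : Monotone fun j => f '' (T ∩ {z | z k ≤ j}) := fun i j hij =>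
    image_mono (inter_subset_inter_right T fun z (hz : z k ≤ i) => hz.trans hij)
  rwa [hunion, hmono.measure_iUnion, lt_iSup_iff] at hT

theorem exists_forall_lt_measure_image_initialBox (μ : Measure Z) {f : (ℕ → ℕ) → Z} {c : ℝ≥0∞}
    (hc : c < μ (range f)) : ∃ b, ∀ k, c < μ (f '' initialBox b k) := by
  choose j hj using fun (k : ℕ) (T : {T : Set (ℕ → ℕ) // c < μ (f '' T)}) =>
    exists_lt_measure_image_inter_le μ T.2 k
  let T : ℕ → {T : Set (ℕ → ℕ) // c < μ (f '' T)} := fun k =>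
    Nat.rec ⟨univ, image_univ ▸ hc⟩ (fun k T => ⟨T.1 ∩ {z | z k ≤ j k T}, hj k T⟩) k
  refine ⟨fun k => j k (T k), fun k => ?_⟩
  suffices hT : (T k).1 = initialBox (fun k => j k (T k)) k from hT ▸ (T k).2
  induction k with
  | zero => simp [T, initialBox]
  | succ k ih => rw [initialBox_succ, ← ih]

theorem exists_isClosed_subset_range_le_measure [TopologicalSpace Z] [T2Space Z]
    [OpensMeasurableSpace Z] (μ : Measure Z) [IsFiniteMeasure μ] {f : (ℕ → ℕ) → Z}
    (hf : Continuous f) {c : ℝ≥0∞} (hc : c < μ (range f)) :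
    ∃ F ⊆ range f, IsClosed F ∧ c ≤ μ F := by
  obtain ⟨b, hb⟩ := exists_forall_lt_measure_image_initialBox μ hc
  refine ⟨_, iInter_closure_image_initialBox_subset_range hf b,
    isClosed_iInter fun _ => isClosed_closure, ?_⟩
  have hanti : Antitone fun k => closure (f '' initialBox b k) := fun k l hkl =>
    closure_mono (image_mono (initialBox_antitone b hkl))
  rw [hanti.measure_iInter (fun _ => isClosed_closure.measurableSet.nullMeasurableSet)
    ⟨0, measure_ne_top _ _⟩]
  exact le_iInf fun k => (hb k).le.trans (measure_mono subset_closure)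

theorem nullMeasurableSet_of_forall_lt_exists_subset {μ : Measure Z} {s : Set Z} (hs : μ s ≠ ∞)
    (h : ∀ c < μ s, ∃ t ⊆ s, MeasurableSet t ∧ c ≤ μ t) : NullMeasurableSet s μ := by
  rcases eq_zero_or_pos (μ s) with h0 | hpos
  · exact NullMeasurableSet.of_null h0
  obtain ⟨c, -, hc, hlim⟩ := exists_seq_strictMono_tendsto' hpos
  choose t hts ht hct using fun n => h (c n) (hc n).2
  have hle : μ s ≤ μ (⋃ n, t n) :=
    le_of_tendsto' hlim fun n => (hct n).trans (measure_mono (subset_iUnion t n))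
  have hmeas : NullMeasurableSet (⋃ n, t n) μ := (MeasurableSet.iUnion ht).nullMeasurableSet
  exact hmeas.congr (ae_eq_of_subset_of_measure_ge (iUnion_subset hts) hle hmeas hs)

theorem nullMeasurableSet_of_analyticSet [TopologicalSpace Z] [T2Space Z]
    [OpensMeasurableSpace Z] {s : Set Z} (hs : AnalyticSet s) (μ : Measure Z) [SFinite μ] :
    NullMeasurableSet s μ := by
  refine NullMeasurableSet.mono_ac ?_ (absolutelyContinuous_toFinite μ)
  rw [AnalyticSet] at hs
  rcases hs with rfl | ⟨f, hf, rfl⟩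
  · exact MeasurableSet.empty.nullMeasurableSet
  · refine nullMeasurableSet_of_forall_lt_exists_subset (measure_ne_top _ _) fun c hc => ?_
    obtain ⟨F, hFf, hF, hcF⟩ := exists_isClosed_subset_range_le_measure μ.toFinite hf hc
    exact ⟨F, hFf, hF.measurableSet, hcF⟩

end AnalyticSets

section LeftmostBranch

/-- The elements of `S` whose first `k` terms are successively as small as possible. -/
noncomputable def leftmostSubset (S : Set (ℕ → ℕ)) : ℕ → Set (ℕ → ℕ)
  | 0 => S
  | k + 1 => leftmostSubset S k ∩ {z | z k = sInf ((fun y => y k) '' leftmostSubset S k)}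

/-- The lexicographic infimum of `S`, which serves as a canonical point of a nonempty closed set.
For empty `S` it is the junk value `0`. -/
noncomputable def leftmostBranch (S : Set (ℕ → ℕ)) (k : ℕ) : ℕ :=
  sInf ((fun y => y k) '' leftmostSubset S k)

theorem leftmostSubset_succ (S : Set (ℕ → ℕ)) (k : ℕ) :
    leftmostSubset S (k + 1) = leftmostSubset S k ∩ {z | z k = leftmostBranch S k} :=
  rfl

theorem leftmostSubset_nonempty {S : Set (ℕ → ℕ)} (hS : S.Nonempty) (k : ℕ) :
    (leftmostSubset S k).Nonempty := by
  induction k with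
  | zero => exact hS
  | succ k ih =>
    obtain ⟨z, hz, hzk⟩ := Nat.sInf_mem (ih.image fun y => y k)
    exact ⟨z, hz, hzk⟩

theorem leftmostSubset_eq (S : Set (ℕ → ℕ)) (k : ℕ) :
    leftmostSubset S k = S ∩ PiNat.cylinder (leftmostBranch S) k := by
  induction k with
  | zero => simp [leftmostSubset]
  | succ k ih =>
    rw [leftmostSubset_succ, ih, inter_assoc]
    congr 1
    ext z
    exact Nat.forall_lt_succ_right.symm

theorem leftmostBranch_mem {S : Set (ℕ → ℕ)} (hS : IsClosed S) (hne : S.Nonempty) :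
    leftmostBranch S ∈ S := by
  choose z hz using leftmostSubset_nonempty hne
  simp only [leftmostSubset_eq] at hz
  refine hS.mem_of_tendsto (f := z) (b := atTop) (tendsto_pi_nhds.2 fun i => ?_)
    (Eventually.of_forall fun k => (hz k).1)
  refine tendsto_const_nhds.congr' ?_
  filter_upwards [eventually_gt_atTop i] with k hik using ((hz k).2 i hik).symm

variable {X : Type*} [MeasurableSpace X]

theorem measurable_sInf_nat {T : X → Set ℕ} (hT : ∀ j, MeasurableSet {x | j ∈ T x}) :
    Measurable fun x => sInf (T x) := by
  classical
  have hex (x : X) : ∃ j, j ∈ T x ∨ ∀ i, i ∉ T x := by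
    by_cases h : ∃ j, j ∈ T x
    · exact h.imp fun _ => Or.inl
    · exact ⟨0, Or.inr (not_exists.1 h)⟩
  have hfind (x : X) : sInf (T x) = Nat.find (hex x) := by
    rcases (T x).eq_empty_or_nonempty with h | h
    · rw [(Nat.find_eq_zero (hex x)).2 (Or.inr (eq_empty_iff_forall_notMem.1 h)), h, Nat.sInf_empty]
    · rw [Nat.sInf_def h]
      exact Nat.find_congr' fun {j} => (or_iff_left fun hempty => h.elim hempty).symm
  have hempty : MeasurableSet {x | ∀ i, i ∉ T x} := by
    rw [ofPred_forall]
    exact MeasurableSet.iInter fun i => (hT i).compl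
  simpa only [hfind] using measurable_find hex fun j => (hT j).union hempty

theorem measurable_leftmostBranch {S : X → Set (ℕ → ℕ)}
    (hS : ∀ U, IsOpen U → MeasurableSet {x | (S x ∩ U).Nonempty}) :
    Measurable fun x => leftmostBranch (S x) := by
  have hopen (k j : ℕ) : IsOpen {z : ℕ → ℕ | z k = j} :=
    (isOpen_discrete ({j} : Set ℕ)).preimage (f := fun z : ℕ → ℕ => z k) (by fun_prop)
  have hbranch (k : ℕ)
      (hk : ∀ U, IsOpen U → MeasurableSet {x | (leftmostSubset (S x) k ∩ U).Nonempty}) :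
      Measurable fun x => leftmostBranch (S x) k :=
    measurable_sInf_nat fun j => hk _ (hopen k j)
  have hsubset (k : ℕ) :
      ∀ U, IsOpen U → MeasurableSet {x | (leftmostSubset (S x) k ∩ U).Nonempty} := by
    induction k with
    | zero => exact hS
    | succ k ih =>
      intro U hU
      have hsplit : {x | (leftmostSubset (S x) (k + 1) ∩ U).Nonempty} =
          ⋃ j, (fun x => leftmostBranch (S x) k) ⁻¹' {j} ∩
            {x | (leftmostSubset (S x) k ∩ ({z | z k = j} ∩ U)).Nonempty} := by
        ext x
        simp [leftmostSubset_succ, inter_assoc]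
      rw [hsplit]
      exact MeasurableSet.iUnion fun j =>
        (hbranch k ih (measurableSet_singleton j)).inter (ih _ ((hopen k j).inter hU))
  exact measurable_pi_iff.2 fun k => hbranch k (hsubset k)

end LeftmostBranch

section Selection

theorem exists_measurable_ae_section {Z : Type*} [TopologicalSpace Z] [T2Space Z]
    [MeasurableSpace Z] [OpensMeasurableSpace Z] (μ : Measure Z) [SFinite μ]
    {f : (ℕ → ℕ) → Z} (hf : Continuous f) :
    ∃ g : Z → ℕ → ℕ, Measurable g ∧ ∀ᵐ z ∂μ, z ∈ range f → f (g z) = z := by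
  have himage (U : Set (ℕ → ℕ)) : {z | (f ⁻¹' {z} ∩ U).Nonempty} = f '' U := by
    ext z
    exact exists_congr fun _ => and_comm
  have hnull : NullMeasurable (fun z => leftmostBranch (f ⁻¹' {z})) μ :=
    measurable_leftmostBranch (X := NullMeasurableSpace Z μ) fun U hU =>
      himage U ▸ nullMeasurableSet_of_analyticSet (hU.analyticSet_image hf) μ
  have hae := hnull.aemeasurable
  refine ⟨hae.mk _, hae.measurable_mk, ?_⟩
  filter_upwards [hae.ae_eq_mk] with z hz hzf
  rw [← hz]
  exact leftmostBranch_mem (isClosed_singleton.preimage hf) hzf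

variable {X Y : Type*} [MeasurableSpace X] [MeasurableSpace Y]

-- Only countably many subsets of `X` enter the construction of `G`, so the selection problem over
-- the arbitrary space `X` is pulled back from one over the Cantor space.
theorem exists_eq_preimage_prodMap_of_measurableSet {G : Set (X × Y)} (hG : MeasurableSet G) :
    ∃ φ : X → ℕ → Bool, Measurable φ ∧
      ∃ H : Set ((ℕ → Bool) × Y), MeasurableSet H ∧ G = Prod.map φ id ⁻¹' H := by
  rw [← generateFrom_prod] at hG
  induction G, hG using MeasurableSpace.generateFrom_induction with
  | hC G hG _ =>
    classical
    obtain ⟨A, hA, D, hD, rfl⟩ := hG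
    refine ⟨fun x _ => decide (x ∈ A), ?_, {a | a 0 = true} ×ˢ D, ?_, ?_⟩
    · exact measurable_pi_iff.2 fun _ => measurable_to_bool (by simpa [preimage] using hA)
    · exact (measurableSet_eq_fun (measurable_pi_apply 0) measurable_const).prod hD
    · ext; simp
  | empty => exact ⟨fun _ _ => true, measurable_const, ∅, MeasurableSet.empty, rfl⟩
  | compl G _ ih =>
    obtain ⟨φ, hφ, H, hH, rfl⟩ := ih
    exact ⟨φ, hφ, Hᶜ, hH.compl, rfl⟩
  | iUnion G _ ih =>
    choose φ hφ H hH hG using ih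
    refine ⟨fun x k => φ k.unpair.1 x k.unpair.2, ?_,
      ⋃ n, Prod.map (fun a k => a (Nat.pair n k)) id ⁻¹' H n, ?_, ?_⟩
    · exact measurable_pi_iff.2 fun k => (measurable_pi_apply _).comp (hφ _)
    · refine MeasurableSet.iUnion fun n => Measurable.prodMap ?_ measurable_id (hH n)
      exact measurable_pi_iff.2 fun k => measurable_pi_apply _
    · ext ⟨x, y⟩
      simp [hG]

/-- Aumann's measurable selection theorem. -/
theorem exists_measurable_ae_selection [StandardBorelSpace Y] [Nonempty Y] (μ : Measure X)
    [SFinite μ] {G : Set (X × Y)} (hG : MeasurableSet G) :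
    ∃ g : X → Y, Measurable g ∧ ∀ᵐ x ∂μ, (∃ y, (x, y) ∈ G) → (x, g x) ∈ G := by
  obtain ⟨φ, hφ, H, hH, rfl⟩ := exists_eq_preimage_prodMap_of_measurableSet hG
  let := upgradeStandardBorel Y
  have : PolishSpace (ℕ → Bool) := {}
  have hanalytic := hH.analyticSet
  rw [AnalyticSet] at hanalytic
  rcases hanalytic with rfl | ⟨f, hf, rfl⟩
  · exact ⟨fun _ => Classical.arbitrary Y, measurable_const, by simp⟩
  obtain ⟨σ, hσ, hσf⟩ := exists_measurable_ae_section (μ.map φ) hf.fst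
  refine ⟨fun x => (f (σ (φ x))).2, hf.snd.measurable.comp (hσ.comp hφ), ?_⟩
  filter_upwards [ae_of_ae_map hφ.aemeasurable hσf] with x hx
  rintro ⟨y, z, hz⟩
  exact ⟨σ (φ x), Prod.ext (hx ⟨z, congrArg Prod.fst hz⟩) rfl⟩

theorem measurableSet_graph_of_isClosed [TopologicalSpace Y] [SecondCountableTopology Y]
    [OpensMeasurableSpace Y] {F : X → Set Y} (hF : ∀ x, IsClosed (F x))
    (hmeas : ∀ U, IsOpen U → MeasurableSet {x | (F x ∩ U).Nonempty}) :
    MeasurableSet {q : X × Y | q.2 ∈ F q.1} := by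
  have hbasis := TopologicalSpace.isBasis_countableBasis Y
  have hcompl : {q : X × Y | q.2 ∈ F q.1}ᶜ =
      ⋃ U ∈ TopologicalSpace.countableBasis Y, {x | (F x ∩ U).Nonempty}ᶜ ×ˢ U := by
    ext ⟨x, y⟩
    simp only [mem_iUnion₂, mem_prod, mem_compl_iff, mem_ofPred_eq, exists_prop]
    constructor
    · intro hy
      obtain ⟨U, hU, hyU, hUF⟩ := hbasis.exists_subset_of_mem_open hy (hF x).isOpen_compl
      exact ⟨U, hU, fun ⟨z, hzF, hzU⟩ => hUF hzU hzF, hyU⟩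
    · rintro ⟨U, -, hFU, hyU⟩ hy
      exact hFU ⟨y, hy, hyU⟩
  rw [← MeasurableSet.compl_iff, hcompl]
  exact MeasurableSet.biUnion (TopologicalSpace.countable_countableBasis Y) fun U hU =>
    (hmeas U (hbasis.isOpen hU)).compl.prod (hbasis.isOpen hU).measurableSet

end Selection

section ModulusOfConvexity

variable {V : Type*} [NormedAddCommGroup V] {ε : ℝ}

theorem modulusOfConvexity_le_of_norm_eq [NormedSpace ℝ V] {r : ℝ} (hr : 0 < r) {v w : V}
    (hv : ‖v‖ = r) (hw : ‖w‖ = r) (hvw : ε * r ≤ ‖v - w‖) :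
    modulusOfConvexity V ε ≤ 1 - ‖v + w‖ / (2 * r) := by
  have hnorm (u : V) : ‖r⁻¹ • u‖ = ‖u‖ / r := by
    rw [norm_smul, Real.norm_of_nonneg (inv_pos.2 hr).le, inv_mul_eq_div]
  refine csInf_le ⟨0, ?_⟩ ⟨r⁻¹ • v, r⁻¹ • w, ?_, ?_, ?_, ?_⟩
  · rintro - ⟨v, w, hv, hw, -, rfl⟩
    rw [norm_smul, Real.norm_of_nonneg (by norm_num)]
    linarith [norm_add_le v w]
  · rw [hnorm, hv, div_self hr.ne']
  · rw [hnorm, hw, div_self hr.ne']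
  · rwa [← smul_sub, hnorm, le_div_iff₀ hr]
  · rw [← smul_add, norm_smul, hnorm, Real.norm_of_nonneg (by norm_num), div_mul_eq_div_div_swap,
      inv_mul_eq_div]

theorem modulusOfConvexity_le_one (V : Type*) [NormedAddCommGroup V] [NormedSpace ℝ V] (ε : ℝ) :
    modulusOfConvexity V ε ≤ 1 := by
  by_cases h : ∃ v w : V, ‖v‖ = 1 ∧ ‖w‖ = 1 ∧ ε ≤ ‖v - w‖
  · obtain ⟨v, w, hv, hw, hvw⟩ := h
    exact (modulusOfConvexity_le_of_norm_eq one_pos hv hw (by rwa [mul_one])).trans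
      (sub_le_self 1 (by positivity))
  · refine le_of_eq_of_le ?_ zero_le_one
    rw [modulusOfConvexity, ← Real.sInf_empty]
    congr 1
    exact eq_empty_of_forall_notMem fun _ ⟨v, w, hv, hw, hvw, _⟩ => h ⟨v, w, hv, hw, hvw⟩

theorem modulusOfConvexity_of_subsingleton (V : Type*) [NormedAddCommGroup V] [Module ℝ V]
    [Subsingleton V] (ε : ℝ) : modulusOfConvexity V ε = 0 := by
  simp [modulusOfConvexity, Subsingleton.elim _ (0 : V)]

theorem fiberModulus_le_one (S : Set V) (ε : ℝ) : fiberModulus S ε ≤ 1 := by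
  refine csInf_le ⟨0, ?_⟩ (mem_insert _ _)
  rintro - (rfl | ⟨v, -, w, -, hv, hw, -, rfl⟩)
  · exact zero_le_one
  · linarith [norm_add_le v w]

theorem exists_lt_of_fiberModulus_lt {S : Set V} {s : ℝ} (hs : s ≤ 1)
    (h : fiberModulus S ε < s) :
    ∃ v ∈ S, ∃ w ∈ S, ‖v‖ = 1 ∧ ‖w‖ = 1 ∧ ε ≤ ‖v - w‖ ∧ 1 - ‖v + w‖ / 2 < s := by
  obtain ⟨r, rfl | ⟨v, hv, w, hw, hv1, hw1, hvw, rfl⟩, hr⟩ :=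
    exists_lt_of_csInf_lt (insert_nonempty _ _) h
  · exact absurd hr hs.not_gt
  · exact ⟨v, hv, w, hw, hv1, hw1, hvw, hr⟩

end ModulusOfConvexity

section Sections

variable {X B : Type*} [MeasurableSpace X] {m : Measure X} [NormedAddCommGroup B]
  {p : ℝ≥0∞} [Fact (1 ≤ p)] {P : Set X}

theorem mul_norm_indicatorConstLp_le_norm (hP : MeasurableSet P) (hPfin : m P ≠ ∞)
    {f : Lp B p m} {t : ℝ} (ht : 0 ≤ t) (hf : ∀ᵐ x ∂m, x ∈ P → t ≤ ‖f x‖) :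
    t * ‖indicatorConstLp p hP hPfin (1 : ℝ)‖ ≤ ‖f‖ := by
  rw [← Real.norm_of_nonneg ht, ← norm_smul]
  refine Lp.norm_le_norm_of_ae_le ?_
  filter_upwards [hf, Lp.coeFn_smul t (indicatorConstLp p hP hPfin (1 : ℝ)),
    indicatorConstLp_coeFn (p := p) (hs := hP) (hμs := hPfin) (c := (1 : ℝ))] with x hfx hsmul h1
  rw [hsmul, Pi.smul_apply, h1]
  by_cases hx : x ∈ P
  · simpa [hx, abs_of_nonneg ht] using hfx hx
  · simp [hx]

variable [NormedSpace ℝ B]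

namespace BanachBundle

theorem exists_section_eq_indicator (E : BanachBundle X B) (hP : MeasurableSet P)
    (hPfin : m P ≠ ∞) {y : X → B} (hy : AEStronglyMeasurable y m)
    (hmem : ∀ x ∈ P, y x ∈ E.fiber x) (hnorm : ∀ x ∈ P, ‖y x‖ = 1) :
    ∃ f : E.sections m p, (f : X → B) =ᵐ[m] P.indicator y ∧
      ‖f‖ = ‖indicatorConstLp p hP hPfin (1 : ℝ)‖ := by
  have hind (x : X) : ‖P.indicator y x‖ = ‖P.indicator (fun _ => (1 : ℝ)) x‖ := by
    by_cases hx : x ∈ P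
    · simp [hx, hnorm x hx]
    · simp [hx]
  have hLp : MemLp (P.indicator y) p m :=
    (memLp_indicator_const p hP (1 : ℝ) (Or.inr hPfin)).congr_norm (hy.indicator hP)
      (Eventually.of_forall fun x => (hind x).symm)
  have hfiber : ∀ᵐ x ∂m, hLp.toLp _ x ∈ E.fiber x := by
    filter_upwards [hLp.coeFn_toLp] with x hx
    rw [hx]
    by_cases hxP : x ∈ P
    · simpa [hxP] using hmem x hxP
    · simp [hxP]
  refine ⟨⟨hLp.toLp _, hfiber⟩, hLp.coeFn_toLp, ?_⟩
  exact congrArg ENNReal.toReal ((eLpNorm_congr_ae hLp.coeFn_toLp).trans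
    ((eLpNorm_congr_norm_ae (Eventually.of_forall hind)).trans
      (eLpNorm_congr_ae indicatorConstLp_coeFn.symm)))

theorem modulusOfConvexity_sections_le (E : BanachBundle X B) (hP : MeasurableSet P)
    (hP0 : m P ≠ 0) (hPfin : m P ≠ ∞) {v w : X → B}
    (hv : AEStronglyMeasurable v m) (hw : AEStronglyMeasurable w m)
    (hvE : ∀ x ∈ P, v x ∈ E.fiber x) (hwE : ∀ x ∈ P, w x ∈ E.fiber x)
    (hv1 : ∀ x ∈ P, ‖v x‖ = 1) (hw1 : ∀ x ∈ P, ‖w x‖ = 1)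
    {ε t : ℝ} (hε : 0 ≤ ε) (ht : 0 ≤ t)
    (hsub : ∀ x ∈ P, ε ≤ ‖v x - w x‖) (hadd : ∀ x ∈ P, t ≤ ‖v x + w x‖) :
    modulusOfConvexity (E.sections m p) ε ≤ 1 - t / 2 := by
  obtain ⟨f, hf, hfr⟩ := E.exists_section_eq_indicator (p := p) hP hPfin hv hvE hv1
  obtain ⟨g, hg, hgr⟩ := E.exists_section_eq_indicator (p := p) hP hPfin hw hwE hw1
  set r := ‖indicatorConstLp p hP hPfin (1 : ℝ)‖
  have hr : 0 < r := by
    have hp0 : p ≠ 0 := (one_pos.trans_le Fact.out).ne'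
    rw [show r = _ from norm_indicatorConstLp' hp0 hP0, norm_one, one_mul]
    exact Real.rpow_pos_of_pos (ENNReal.toReal_pos hP0 hPfin) _
  have hfg_sub : ε * r ≤ ‖f - g‖ := by
    refine mul_norm_indicatorConstLp_le_norm (f := (f - g : Lp B p m)) hP hPfin hε ?_
    filter_upwards [hf, hg, Lp.coeFn_sub (f : Lp B p m) g] with x hfx hgx hfgx hx
    rw [hfgx, Pi.sub_apply, hfx, hgx]
    simpa [hx] using hsub x hx
  have hfg_add : t * r ≤ ‖f + g‖ := by
    refine mul_norm_indicatorConstLp_le_norm (f := (f + g : Lp B p m)) hP hPfin ht ?_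
    filter_upwards [hf, hg, Lp.coeFn_add (f : Lp B p m) g] with x hfx hgx hfgx hx
    rw [hfgx, Pi.add_apply, hfx, hgx]
    simpa [hx] using hadd x hx
  calc modulusOfConvexity (E.sections m p) ε ≤ 1 - ‖f + g‖ / (2 * r) :=
        modulusOfConvexity_le_of_norm_eq hr hfr hgr hfg_sub
    _ ≤ 1 - t * r / (2 * r) := by gcongr
    _ = 1 - t / 2 := by rw [mul_div_mul_right t 2 hr.ne']

theorem exists_measurable_ae_selection_pair [CompleteSpace B]
    [TopologicalSpace.SeparableSpace B] [SFinite m] (E : BanachBundle X B)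
    [MeasurableSpace B] [BorelSpace B] {C : Set (B × B)} (hC : MeasurableSet C) :
    ∃ q : X → B × B, Measurable q ∧
      MeasurableSet {x | (q x).1 ∈ E.fiber x ∧ (q x).2 ∈ E.fiber x ∧ q x ∈ C} ∧
      ∀ᵐ x ∂m, (∃ v ∈ E.fiber x, ∃ w ∈ E.fiber x, (v, w) ∈ C) →
        (q x).1 ∈ E.fiber x ∧ (q x).2 ∈ E.fiber x ∧ q x ∈ C := by
  have := UniformSpace.secondCountable_of_separable B
  have hgraph := measurableSet_graph_of_isClosed E.isClosed_fiber E.weaklyMeasurable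
  let G : Set (X × B × B) := {a | a.2.1 ∈ E.fiber a.1 ∧ a.2.2 ∈ E.fiber a.1 ∧ a.2 ∈ C}
  have hG : MeasurableSet G :=
    (hgraph.preimage (by fun_prop : Measurable fun a : X × B × B => (a.1, a.2.1))).inter
      ((hgraph.preimage (by fun_prop : Measurable fun a : X × B × B => (a.1, a.2.2))).inter
        (hC.preimage measurable_snd))
  obtain ⟨q, hq, hqG⟩ := exists_measurable_ae_selection m hG
  refine ⟨q, hq, hG.preimage (measurable_id.prodMk hq), ?_⟩
  filter_upwards [hqG] with x hx
  rintro ⟨v, hv, w, hw, hvw⟩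
  exact hx ⟨(v, w), hv, hw, hvw⟩

theorem ae_le_fiberModulus_of_lt_modulusOfConvexity_sections [CompleteSpace B]
    [TopologicalSpace.SeparableSpace B] [SigmaFinite m] (E : BanachBundle X B) {ε s : ℝ}
    (hε : 0 ≤ ε) (hs : s < modulusOfConvexity (E.sections m p) ε) :
    ∀ᵐ x ∂m, s ≤ fiberModulus (E.fiber x : Set B) ε := by
  have hs1 : s ≤ 1 := hs.le.trans (modulusOfConvexity_le_one _ ε)
  borelize B
  have := UniformSpace.secondCountable_of_separable B
  let C : Set (B × B) :=
    {q | ‖q.1‖ = 1 ∧ ‖q.2‖ = 1 ∧ ε ≤ ‖q.1 - q.2‖ ∧ 2 * (1 - s) ≤ ‖q.1 + q.2‖}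
  have hC : IsClosed C := by
    simp only [C, ofPred_and]
    refine (isClosed_eq ?_ ?_).inter <| (isClosed_eq ?_ ?_).inter <|
      (isClosed_le ?_ ?_).inter (isClosed_le ?_ ?_) <;> fun_prop
  obtain ⟨q, hq, hS, hqC⟩ :=
    E.exists_measurable_ae_selection_pair (m := m) hC.measurableSet
  have hnull : m {x | (q x).1 ∈ E.fiber x ∧ (q x).2 ∈ E.fiber x ∧ q x ∈ C} = 0 := by
    by_contra hpos
    obtain ⟨P, hP, hPS, hP0, hPfin⟩ :=
      Measure.exists_subset_measure_lt_top hS (pos_iff_ne_zero.2 hpos)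
    have hle := E.modulusOfConvexity_sections_le (p := p) hP hP0.ne' hPfin.ne
      hq.fst.aestronglyMeasurable hq.snd.aestronglyMeasurable
      (fun x hx => (hPS hx).1) (fun x hx => (hPS hx).2.1)
      (fun x hx => (hPS hx).2.2.1) (fun x hx => (hPS hx).2.2.2.1) hε (t := 2 * (1 - s))
      (by linarith) (fun x hx => (hPS hx).2.2.2.2.1) (fun x hx => (hPS hx).2.2.2.2.2)
    linarith
  filter_upwards [hqC, measure_eq_zero_iff_ae_notMem.1 hnull] with x hxC hxnot
  by_contra! hlt
  obtain ⟨v, hv, w, hw, hv1, hw1, hsub, hadd⟩ := exists_lt_of_fiberModulus_lt hs1 hlt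
  exact hxnot (hxC ⟨v, hv, w, hw, hv1, hw1, hsub, by dsimp only; linarith⟩)

end BanachBundle

end Sections

theorem modulus_sections_le_essInf_fiber_modulus_general
    {X B : Type*} [MeasurableSpace X] (m : Measure X) [SigmaFinite m]
    [NormedAddCommGroup B] [NormedSpace ℝ B] [CompleteSpace B]
    [TopologicalSpace.SeparableSpace B]
    (E : BanachBundle X B) (p : ℝ≥0∞) [Fact (1 ≤ p)]
    (ε : ℝ) (hε : ε ∈ Set.Ioc (0 : ℝ) 2) :
    modulusOfConvexity ↥(E.sections m p) ε ≤
      essInf (fun x => fiberModulus (E.fiber x : Set B) ε) m := by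
  rcases eq_zero_or_neZero m with rfl | hm
  · have : Subsingleton (E.sections (0 : Measure X) p) :=
      ⟨fun f g => Subtype.ext (Lp.ext (by simp [EventuallyEq]))⟩
    -- Both sides vanish: the infimum over no unit vectors, and the supremum of all of `ℝ`.
    rw [modulusOfConvexity_of_subsingleton]
    simp [essInf, liminf, limsInf]
  · have hbdd : IsBoundedUnder (· ≤ ·) (ae m) fun x => fiberModulus (E.fiber x : Set B) ε :=
      isBoundedUnder_of ⟨1, fun _ => fiberModulus_le_one _ _⟩
    exact le_of_forall_lt_imp_le_of_dense fun s hs =>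
      le_liminf_of_le hbdd.isCoboundedUnder_ge
        (E.ae_le_fiberModulus_of_lt_modulusOfConvexity_sections hε.1.le hs)

/-- The modulus of convexity of the section space `Γ_p(E)` is bounded above by the essential
infimum of the moduli of convexity of the fibers. -/
theorem modulus_sections_le_essInf_fiber_modulus
    {X B : Type*} [MeasurableSpace X] (m : Measure X) [SigmaFinite m]
    [NormedAddCommGroup B] [NormedSpace ℝ B] [CompleteSpace B]
    [TopologicalSpace.SeparableSpace B]
    (E : BanachBundle X B)
    (p : ℝ≥0∞) [Fact (1 ≤ p)] (hp : 1 < p) (hp' : p ≠ ∞)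
    (ε : ℝ) (hε : ε ∈ Set.Ioc (0 : ℝ) 2) :
    modulusOfConvexity ↥(E.sections m p) ε ≤
      essInf (fun x => fiberModulus (E.fiber x : Set B) ε) m :=
  modulus_sections_le_essInf_fiber_modulus_general m E p ε hε
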